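/- For all real numbers α, β, γ, δ, setting U := e^{iα}·Rz(β)·Ry(γ)·Rz(δ), P := diag(1, e^{iα}), A := Rz(β)·Ry(γ/2), B := Ry(−γ/2)·Rz(−(δ+β)/2), and C := Rz((δ−β)/2), the 4×4 identity C(U) = (P ⊗ A)·CNOT·(I₂ ⊗ B)·CNOT·(I₂ ⊗ C) holds. -/

import Mathlib

open Matrix Complex Kronecker

noncomputable section

/-- Rz(θ) := diag(e^{-iθ/2}, e^{iθ/2}) -/
def Rz (θ : ℝ) : Matrix (Fin 2) (Fin 2) ℂ :=
  !![Complex.exp (-((θ : ℂ)/2) * Complex.I), 0; 0, Complex.exp (((θ : ℂ)/2) * Complex.I)]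

/-- Ry(θ) := [[cos(θ/2), -sin(θ/2)],[sin(θ/2), cos(θ/2)]] -/
def Ry (θ : ℝ) : Matrix (Fin 2) (Fin 2) ℂ :=
  !![(Real.cos (θ/2) : ℂ), -(Real.sin (θ/2) : ℂ);
     (Real.sin (θ/2) : ℂ),  (Real.cos (θ/2) : ℂ)]

/-- Pauli X -/
def X : Matrix (Fin 2) (Fin 2) ℂ := !![0, 1; 1, 0]

/-- The controlled-U gate: block-diagonal diag(I₂, U) on ℂ²⊗ℂ²
(first factor = control, basis ordering |00⟩,|01⟩,|10⟩,|11⟩). -/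
def ctrl (U : Matrix (Fin 2) (Fin 2) ℂ) : Matrix (Fin 2 × Fin 2) (Fin 2 × Fin 2) ℂ :=
  Matrix.of fun p q =>
    if p.1 = 0 ∧ q.1 = 0 then (1 : Matrix (Fin 2) (Fin 2) ℂ) p.2 q.2
    else if p.1 = 1 ∧ q.1 = 1 then U p.2 q.2
    else 0

/-- CNOT = diag(I₂, X). -/
def CNOT : Matrix (Fin 2 × Fin 2) (Fin 2 × Fin 2) ℂ := ctrl X

/-!
In the control basis every factor is block diagonal, so the circuit applies `A * B * C` when the
control is `|0⟩` and `e^{iα} • (A * X * B * X * C)` when it is `|1⟩`. The angles are chosen so that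
the rotations cancel in the first product; conjugation by `X` reverses both rotations in `B`, and
in the second product they then add up to `Rz β * Ry γ * Rz δ`.
-/

lemma ctrl_eq_reindexAlgEquiv_blockDiagonal (U : Matrix (Fin 2) (Fin 2) ℂ) :
    ctrl U = reindexAlgEquiv ℂ ℂ (Equiv.prodComm (Fin 2) (Fin 2)) (blockDiagonal ![1, U]) := by
  ext ⟨i, k⟩ ⟨j, l⟩
  fin_cases i <;> fin_cases j <;> simp [ctrl, blockDiagonal_apply]

theorem ctrl_smul_eq_of_mul_eq_one (c : ℂ) {A B C : Matrix (Fin 2) (Fin 2) ℂ}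
    (hABC : A * B * C = 1) (V W : Matrix (Fin 2) (Fin 2) ℂ) :
    ctrl (c • (A * V * B * W * C)) =
      (!![1, 0; 0, c] ⊗ₖ A) * ctrl V * ((1 : Matrix (Fin 2) (Fin 2) ℂ) ⊗ₖ B) * ctrl W *
        ((1 : Matrix (Fin 2) (Fin 2) ℂ) ⊗ₖ C) := by
  simp only [← diagonal_vec2, diagonal_kronecker, one_kronecker, ← coe_reindexAlgEquiv ℂ ℂ,
    ctrl_eq_reindexAlgEquiv_blockDiagonal, ← map_mul, ← blockDiagonal_mul]
  congr 2
  ext1 k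
  fin_cases k
  · simp [hABC]
  · simp

lemma Rz_zero : Rz 0 = 1 := by
  simp [Rz, one_fin_two]

lemma Rz_add (θ φ : ℝ) : Rz (θ + φ) = Rz θ * Rz φ := by
  simp [Rz, ← Complex.exp_add, add_div, add_mul, add_comm]

lemma Ry_zero : Ry 0 = 1 := by
  simp [Ry, one_fin_two]

lemma Ry_add (θ φ : ℝ) : Ry (θ + φ) = Ry θ * Ry φ := by
  simp only [Ry, add_div, Real.cos_add, Real.sin_add]
  ext i j
  fin_cases i <;> fin_cases j <;> simp <;> ring

lemma X_mul_self : X * X = 1 := by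
  simp [X, one_fin_two]

lemma X_mul_Rz_mul_X (θ : ℝ) : X * Rz θ * X = Rz (-θ) := by
  simp [X, Rz, neg_div]

lemma X_mul_Ry_mul_X (θ : ℝ) : X * Ry θ * X = Ry (-θ) := by
  simp [X, Ry, neg_div]

lemma X_mul_Ry_mul_Rz_mul_X (θ φ : ℝ) : X * (Ry θ * Rz φ) * X = Ry (-θ) * Rz (-φ) := by
  calc X * (Ry θ * Rz φ) * X
      = X * Ry θ * (X * X) * Rz φ * X := by rw [X_mul_self]; noncomm_ring
    _ = (X * Ry θ * X) * (X * Rz φ * X) := by noncomm_ring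
    _ = Ry (-θ) * Rz (-φ) := by rw [X_mul_Ry_mul_X, X_mul_Rz_mul_X]

lemma half_angle_rotations_mul_eq_one (β γ δ : ℝ) :
    Rz β * Ry (γ / 2) * (Ry (-γ / 2) * Rz (-(δ + β) / 2)) * Rz ((δ - β) / 2) = 1 := by
  calc Rz β * Ry (γ / 2) * (Ry (-γ / 2) * Rz (-(δ + β) / 2)) * Rz ((δ - β) / 2)
      = Rz β * Ry (γ / 2 + -γ / 2) * Rz (-(δ + β) / 2 + (δ - β) / 2) := by
        simp only [Ry_add, Rz_add, mul_assoc]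
    _ = Rz β * Ry 0 * Rz (-β) := by ring_nf
    _ = 1 := by rw [Ry_zero, mul_one, ← Rz_add, add_neg_cancel, Rz_zero]

lemma half_angle_rotations_mul_X_mul_X_eq (β γ δ : ℝ) :
    Rz β * Ry (γ / 2) * X * (Ry (-γ / 2) * Rz (-(δ + β) / 2)) * X * Rz ((δ - β) / 2) =
      Rz β * Ry γ * Rz δ := by
  calc Rz β * Ry (γ / 2) * X * (Ry (-γ / 2) * Rz (-(δ + β) / 2)) * X * Rz ((δ - β) / 2)
      = Rz β * Ry (γ / 2) * (X * (Ry (-γ / 2) * Rz (-(δ + β) / 2)) * X) * Rz ((δ - β) / 2) := by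
        simp only [mul_assoc]
    _ = Rz β * Ry (γ / 2 + -(-γ / 2)) * Rz (-(-(δ + β) / 2) + (δ - β) / 2) := by
        rw [X_mul_Ry_mul_Rz_mul_X]
        simp only [Ry_add, Rz_add, mul_assoc]
    _ = Rz β * Ry γ * Rz δ := by ring_nf

theorem controlled_U_decomposition (α β γ δ : ℝ) :
    ctrl (Complex.exp ((α : ℂ) * Complex.I) • (Rz β * Ry γ * Rz δ)) =
      (!![1, 0; 0, Complex.exp ((α : ℂ) * Complex.I)] ⊗ₖ (Rz β * Ry (γ/2))) * CNOT *
        ((1 : Matrix (Fin 2) (Fin 2) ℂ) ⊗ₖ (Ry (-γ/2) * Rz (-(δ+β)/2))) * CNOT *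
        ((1 : Matrix (Fin 2) (Fin 2) ℂ) ⊗ₖ Rz ((δ-β)/2)) := by
  rw [← half_angle_rotations_mul_X_mul_X_eq β γ δ]
  exact ctrl_smul_eq_of_mul_eq_one _ (half_angle_rotations_mul_eq_one β γ δ) X X

end
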